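/- Let s ≥ 1, ϑ ≥ 0, and take the first-order RKC1 coefficients: ω0 = 1 + ϑ/s², ω1 = T_s(ω0)/T_s′(ω0), b_j = 1/T_j(ω0), with μ_j, ν_j, κ_j the RKC coefficients (γ_j = 0). Let f : ℝⁿ → ℝⁿ be twice continuously differentiable with ‖f″(x)‖ ≤ C_{f″} for all x. Let yⁿ, ŷⁿ ∈ ℝⁿ and Δt > 0, and assume the Jacobian matrix J of f at yⁿ is symmetric with all eigenvalues in [−ρ, 0], where Δt·ρ ≤ 2ω0/ω1. Define the exact RKC step: d_0 = 0, d_1 = μ_1 Δt f(yⁿ), d_j = ν_j d_{j−1} + κ_j d_{j−2} + μ_j Δt f(yⁿ + d_{j−1}) for 2 ≤ j ≤ s, y^{n+1} = yⁿ + d_s; and the mixed-precision step: d̂_0 = 0, d̂_1 = μ_1 Δt f(ŷⁿ), d̂_j = ν_j d̂_{j−1} + κ_j d̂_{j−2} + μ_j Δt (f(ŷⁿ) + Δ̂f_{j−1}) for 2 ≤ j ≤ s, ŷ^{n+1} = ŷⁿ + d̂_s. Assume for all 1 ≤ j ≤ s−1: ‖Δ̂f_j − (f(ŷⁿ + d̂_j)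 − f(ŷⁿ))‖₂ ≤ min(Ĉ ε Δt, C_Δ ‖ŷⁿ‖₂), ‖d̂_j‖₂ ≤ C_d · min(Δt ‖f(ŷⁿ)‖₂, ‖ŷⁿ‖₂) and ‖d_j‖₂ ≤ C_d · min(Δt ‖f(yⁿ)‖₂, ‖yⁿ‖₂), for constants Ĉ, ε, C_Δ, C_d ≥ 0. Then ‖ŷ^{n+1} − y^{n+1}‖₂ ≤ ‖ŷⁿ − yⁿ‖₂ + C_{f″} ‖ŷⁿ − yⁿ‖₂² Δt + min(Ĉ ε Δt, C_Δ ‖ŷⁿ‖₂) Δt + C_{f″} C_d² ( min(Δt ‖f(ŷⁿ)‖₂, ‖ŷⁿ‖₂)² + min(Δt ‖f(yⁿ)‖₂, ‖yⁿ‖₂)² ) Δt. -/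

import Mathlib

noncomputable section

/-- Chebyshev polynomial of the first kind, evaluated in an arbitrary ring. -/
def chebT (R : Type*) [Ring R] : ℕ → R → R
  | 0, _ => 1
  | 1, x => x
  | n + 2, x => 2 * x * chebT R (n + 1) x - chebT R n x

/-- Chebyshev polynomial of the second kind, evaluated in an arbitrary ring. -/
def chebU (R : Type*) [Ring R] : ℕ → R → R
  | 0, _ => 1
  | 1, x => 2 * x
  | n + 2, x => 2 * x * chebU R (n + 1) x - chebU R n x

/-- Spectral norm of a real matrix: operator norm induced by the Euclidean norms. -/
def specNorm {m n : ℕ} (A : Matrix (Fin m) (Fin n) ℝ) : ℝ :=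
  ‖(Matrix.toEuclideanLin A).toContinuousLinearMap‖


open Polynomial in
theorem chebT_eq_eval (k : ℕ) (x : ℝ) : chebT ℝ k x = (Chebyshev.T ℝ k).eval x := by
  induction k using Nat.twoStepInduction with
  | zero => simp [chebT]
  | one => simp [chebT]
  | more k ih0 ih1 =>
    have h := congrArg (Polynomial.eval x) (Chebyshev.T_add_two ℝ (k : ℤ))
    push_cast at ih1 ⊢
    simp only [eval_sub, eval_mul, eval_X, eval_ofNat] at h
    rw [h, chebT, ih0, ih1]

open Polynomial in
theorem chebU_eq_eval (k : ℕ) (x : ℝ) : chebU ℝ k x = (Chebyshev.U ℝ k).eval x := by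
  induction k using Nat.twoStepInduction with
  | zero => simp [chebU]
  | one => simp [chebU]
  | more k ih0 ih1 =>
    have h := congrArg (Polynomial.eval x) (Chebyshev.U_add_two ℝ (k : ℤ))
    push_cast at ih1 ⊢
    simp only [eval_sub, eval_mul, eval_X, eval_ofNat] at h
    rw [h, chebU, ih0, ih1]

theorem one_le_chebT (k : ℕ) {w : ℝ} (hw : 1 ≤ w) : 1 ≤ chebT ℝ k w := by
  rw [chebT_eq_eval]
  exact Polynomial.Chebyshev.one_le_eval_T_real k hw

theorem chebT_neg (k : ℕ) (x : ℝ) : chebT ℝ k (-x) = (-1) ^ k * chebT ℝ k x := by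
  induction k using Nat.twoStepInduction with
  | zero => simp [chebT]
  | one => simp [chebT]
  | more k ih0 ih1 =>
    rw [chebT, chebT, ih0, ih1]
    ring

theorem chebT_le_chebT (k : ℕ) {x w : ℝ} (hx : 1 ≤ x) (hxw : x ≤ w) :
    chebT ℝ k x ≤ chebT ℝ k w := by
  rw [chebT_eq_eval, chebT_eq_eval, ← Real.cosh_arcosh hx, ← Real.cosh_arcosh (hx.trans hxw),
    Polynomial.Chebyshev.T_real_cosh, Polynomial.Chebyshev.T_real_cosh, Real.cosh_le_cosh,
    abs_mul, abs_mul, abs_of_nonneg (Real.arcosh_nonneg hx),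
    abs_of_nonneg (Real.arcosh_nonneg (hx.trans hxw))]
  gcongr
  exact (Real.arcosh_le_arcosh (by linarith) (by linarith)).mpr hxw

/-- On `[-w, w]` with `1 ≤ w`, the modulus of `T_k` is largest at `w`. -/
theorem abs_chebT_le (k : ℕ) {x w : ℝ} (hw : 1 ≤ w) (hx : |x| ≤ w) :
    |chebT ℝ k x| ≤ chebT ℝ k w := by
  rcases le_total |x| 1 with h | h
  · refine le_trans ?_ (one_le_chebT k hw)
    rw [chebT_eq_eval]
    exact Polynomial.Chebyshev.abs_eval_T_real_le_one k h
  · have habs : |chebT ℝ k x| = chebT ℝ k |x| := by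
      rw [← abs_of_pos (zero_lt_one.trans_le (one_le_chebT k h))]
      rcases abs_choice x with hx' | hx' <;> rw [hx']
      simp [chebT_neg, abs_mul]
    rw [habs]
    exact chebT_le_chebT k h hx

/-- On `[-w, w]` with `1 ≤ w`, the modulus of `U_k` is largest at `w`. -/
theorem abs_chebU_le (k : ℕ) {x w : ℝ} (hw : 1 ≤ w) (hx : |x| ≤ w) :
    |chebU ℝ k x| ≤ chebU ℝ k w := by
  have hU (k : ℕ) (y : ℝ) : chebU ℝ (k + 2) y = 2 * chebT ℝ (k + 2) y + chebU ℝ k y := by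
    have h := congrArg (Polynomial.eval y) (Polynomial.Chebyshev.U_eq_two_mul_T_add_U ℝ (k : ℤ))
    rw [chebU_eq_eval, chebT_eq_eval, chebU_eq_eval]
    simpa using h
  induction k using Nat.twoStepInduction with
  | zero => simp [chebU]
  | one => simpa [chebU, abs_mul] using hx
  | more k ih _ =>
    rw [hU, hU]
    refine (abs_add_le _ _).trans (add_le_add ?_ ih)
    rw [abs_mul, abs_two]
    exact mul_le_mul_of_nonneg_left (abs_chebT_le _ hw hx) zero_le_two

theorem chebU_pos (k : ℕ) {w : ℝ} (hw : 1 ≤ w) : 0 < chebU ℝ k w := by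
  have hU (k : ℕ) : chebU ℝ (k + 1) w = w * chebU ℝ k w + chebT ℝ (k + 1) w := by
    have h := congrArg (Polynomial.eval w) (Polynomial.Chebyshev.U_eq_X_mul_U_add_T ℝ (k : ℤ))
    rw [chebU_eq_eval, chebT_eq_eval, chebU_eq_eval]
    simpa using h
  induction k with
  | zero => simp [chebU]
  | succ k ih =>
    rw [hU]
    have := one_le_chebT (k + 1) hw
    positivity

/-- Solution formula for the inhomogeneous Chebyshev three-term recurrence. -/
theorem chebyshev_recurrence_solution {R M : Type*} [Ring R] [AddCommGroup M] [Module R M]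
    (X : R) (G g : ℕ → M) (s : ℕ) (h1 : 1 ≤ s → G 1 = X • G 0 + g 0)
    (h : ∀ j, j + 2 ≤ s → G (j + 2) = (2 * X) • G (j + 1) - G j + g (j + 1)) (j : ℕ) (hj : j ≤ s) :
    G j = chebT R j X • G 0 + ∑ k ∈ Finset.range j, chebU R (j - 1 - k) X • g k := by
  induction j using Nat.twoStepInduction with
  | zero => simp [chebT]
  | one => simpa [chebT, chebU] using h1 hj
  | more j ih0 ih1 =>
    have hsum : ∑ k ∈ Finset.range j, chebU R (j + 2 - 1 - k) X • g k
        = (2 * X) • ∑ k ∈ Finset.range j, chebU R (j + 1 - 1 - k) X • g k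
          - ∑ k ∈ Finset.range j, chebU R (j - 1 - k) X • g k := by
      rw [Finset.smul_sum, ← Finset.sum_sub_distrib]
      refine Finset.sum_congr rfl fun k hk => ?_
      obtain ⟨m, rfl⟩ := Nat.exists_eq_add_of_lt (Finset.mem_range.mp hk)
      rw [show k + m + 1 + 2 - 1 - k = m + 2 by omega, show k + m + 1 + 1 - 1 - k = m + 1 by omega,
        show k + m + 1 - 1 - k = m by omega, chebU, sub_smul, mul_smul]
    rw [h j hj, ih0 (by omega), ih1 (by omega), Finset.sum_range_succ _ (j + 1),
      Finset.sum_range_succ _ j, Finset.sum_range_succ _ j, hsum,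
      show j + 2 - 1 - (j + 1) = 0 by omega, show j + 2 - 1 - j = 1 by omega,
      show j + 1 - 1 - j = 0 by omega]
    simp only [chebT, chebU, sub_smul, mul_smul, smul_add, one_smul]
    abel

theorem differentiable_chebT (k : ℕ) : Differentiable ℝ (fun x => chebT ℝ k x) := by
  simp only [chebT_eq_eval]
  exact (Polynomial.Chebyshev.T ℝ k).differentiable

/-- The derivative of `T_s` as a convolution of Chebyshev polynomials of both kinds. -/
theorem deriv_chebT_eq_sum (s : ℕ) (w : ℝ) :
    deriv (fun x => chebT ℝ s x) w = ∑ k ∈ Finset.range s,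
      chebU ℝ (s - 1 - k) w * ((if k = 0 then 1 else 2) * chebT ℝ k w) := by
  have hd (k : ℕ) : DifferentiableAt ℝ (fun x => chebT ℝ k x) w :=
    differentiable_chebT k w
  have h0 : deriv (fun x => chebT ℝ 0 x) w = 0 := by simp [chebT]
  have h := chebyshev_recurrence_solution w (fun k => deriv (fun x => chebT ℝ k x) w)
    (fun k => (if k = 0 then 1 else 2) * chebT ℝ k w) s (fun _ => by simp [chebT])
    (fun j _ => by
      have := (((hasDerivAt_id w).const_mul 2).mul (hd (j + 1)).hasDerivAt).sub (hd j).hasDerivAt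
      have h2 : deriv (fun x => chebT ℝ (j + 2) x) w = _ := HasDerivAt.deriv this
      simp only [h2, smul_eq_mul, id, if_neg (Nat.succ_ne_zero j)]
      ring) s le_rfl
  simpa only [h0, smul_eq_mul, mul_zero, zero_add] using h

theorem deriv_chebT_pos {s : ℕ} (hs : 1 ≤ s) {w : ℝ} (hw : 1 ≤ w) :
    0 < deriv (fun x => chebT ℝ s x) w := by
  rw [deriv_chebT_eq_sum]
  refine Finset.sum_pos (fun k _ => ?_) ⟨0, Finset.mem_range.mpr hs⟩
  have hU := chebU_pos (s - 1 - k) hw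
  have hT := one_le_chebT k hw
  split_ifs <;> positivity

/-- An operator diagonal in an orthonormal basis is bounded by the size of its eigenvalues. -/
theorem OrthonormalBasis.norm_apply_le_of_eigenvalues {ι E : Type*} [Fintype ι]
    [NormedAddCommGroup E] [InnerProductSpace ℝ E] (B : OrthonormalBasis ι ℝ E) (A : E →L[ℝ] E)
    (a : ι → ℝ) (hA : ∀ i, A (B i) = a i • B i) {C : ℝ} (hC : 0 ≤ C) (ha : ∀ i, |a i| ≤ C) (v : E) :
    ‖A v‖ ≤ C * ‖v‖ := by
  have hrepr (i : ι) : inner ℝ (B i) (A v) = a i * inner ℝ (B i) v := by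
    classical
    conv_lhs => rw [← B.sum_repr' v, map_sum, inner_sum]
    simp [hA, inner_smul_right, B.inner_eq_ite, mul_comm]
  refine abs_le_of_sq_le_sq' ?_ (by positivity) |>.2
  rw [mul_pow, ← B.sum_sq_norm_inner_right, ← B.sum_sq_norm_inner_right, Finset.mul_sum]
  refine Finset.sum_le_sum fun i _ => ?_
  rw [hrepr, norm_mul, mul_pow]
  gcongr
  exact ha i

theorem chebT_apply_eigenvector {E : Type*} [NormedAddCommGroup E] [NormedSpace ℝ E]
    (X : E →L[ℝ] E) {v : E} {x : ℝ} (h : X v = x • v) (k : ℕ) :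
    chebT (E →L[ℝ] E) k X v = chebT ℝ k x • v := by
  induction k using Nat.twoStepInduction with
  | zero => simp [chebT]
  | one => simpa [chebT] using h
  | more k ih0 ih1 =>
    simp only [chebT, two_mul, _root_.sub_apply, mul_apply_eq_comp,
      _root_.add_apply, ih0, ih1, map_smul, h]
    module

theorem chebU_apply_eigenvector {E : Type*} [NormedAddCommGroup E] [NormedSpace ℝ E]
    (X : E →L[ℝ] E) {v : E} {x : ℝ} (h : X v = x • v) (k : ℕ) :
    chebU (E →L[ℝ] E) k X v = chebU ℝ k x • v := by
  induction k using Nat.twoStepInduction with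
  | zero => simp [chebU]
  | one => simp [chebU, two_mul, h, add_smul]
  | more k ih0 ih1 =>
    simp only [chebU, two_mul, _root_.sub_apply, mul_apply_eq_comp,
      _root_.add_apply, ih0, ih1, map_smul, h]
    module

/-- Second-order Taylor estimate with a global bound on the second derivative. -/
theorem norm_sub_sub_fderiv_le_of_iteratedFDeriv_two_le {E F : Type*} [NormedAddCommGroup E]
    [NormedSpace ℝ E] [NormedAddCommGroup F] [NormedSpace ℝ F] {f : E → F} (hf : ContDiff ℝ 2 f)
    {C : ℝ} (hC : ∀ x, ‖iteratedFDeriv ℝ 2 f x‖ ≤ C) (x h : E) :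
    ‖f (x + h) - f x - fderiv ℝ f x h‖ ≤ C / 2 * ‖h‖ ^ 2 := by
  have hdiff : Differentiable ℝ (fderiv ℝ f) :=
    (hf.fderiv_right (m := 1) (by norm_num)).differentiable one_ne_zero
  have hlip (y z : E) : ‖fderiv ℝ f z - fderiv ℝ f y‖ ≤ C * ‖z - y‖ := by
    refine Convex.norm_image_sub_le_of_norm_fderiv_le (𝕜 := ℝ) (s := Set.univ)
      (fun u _ => hdiff u) (fun u _ => ?_) convex_univ trivial trivial
    rw [← norm_iteratedFDeriv_one, norm_iteratedFDeriv_fderiv]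
    exact hC u
  have hline (t : ℝ) : HasDerivAt (fun t : ℝ => x + t • h) h t := by
    simpa using ((hasDerivAt_id t).smul_const h).const_add x
  have hderiv (t : ℝ) : HasDerivAt (fun t : ℝ => f (x + t • h) - f x - t • fderiv ℝ f x h)
      (fderiv ℝ f (x + t • h) h - fderiv ℝ f x h) t := by
    have h1 := ((hf.differentiable two_ne_zero (x + t • h)).hasFDerivAt.comp_hasDerivAt t
      (hline t)).sub_const (f x)
    simpa using! h1.sub ((hasDerivAt_id t).smul_const (fderiv ℝ f x h))
  have hB (t : ℝ) : HasDerivAt (fun t : ℝ => C / 2 * ‖h‖ ^ 2 * t ^ 2) (C * t * ‖h‖ ^ 2) t := by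
    refine ((hasDerivAt_pow 2 t).const_mul (C / 2 * ‖h‖ ^ 2)).congr_deriv ?_
    push_cast
    ring
  have := image_norm_le_of_norm_deriv_right_le_deriv_boundary (a := 0) (b := 1)
    (fun t _ => (hderiv t).continuousAt.continuousWithinAt)
    (fun t _ => (hderiv t).hasDerivWithinAt) (by simp) hB (fun t ht => ?_)
    (Set.right_mem_Icc.mpr zero_le_one)
  · simpa using this
  · rw [← _root_.sub_apply]
    refine (ContinuousLinearMap.le_opNorm _ _).trans ?_
    refine (mul_le_mul_of_nonneg_right (hlip x (x + t • h)) (norm_nonneg h)).trans_eq ?_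
    rw [add_sub_cancel_left, norm_smul, Real.norm_of_nonneg ht.1]
    ring

/-- Difference of two linearization errors about the same point. -/
theorem norm_linearization_error_sub_le {E F : Type*} [NormedAddCommGroup E]
    [NormedSpace ℝ E] [NormedAddCommGroup F] [NormedSpace ℝ F] {f : E → F} (hf : ContDiff ℝ 2 f)
    {C : ℝ} (hC : ∀ x, ‖iteratedFDeriv ℝ 2 f x‖ ≤ C) (x e a b : E) :
    ‖(f (x + (e + a)) - f x - fderiv ℝ f x (e + a)) - (f (x + b) - f x - fderiv ℝ f x b)‖
      ≤ C * (‖e‖ ^ 2 + ‖a‖ ^ 2 + ‖b‖ ^ 2) := by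
  have hC0 : 0 ≤ C := (norm_nonneg _).trans (hC x)
  have h1 : ‖e + a‖ ^ 2 ≤ 2 * (‖e‖ ^ 2 + ‖a‖ ^ 2) :=
    (pow_le_pow_left₀ (norm_nonneg _) (norm_add_le e a) 2).trans add_sq_le
  calc _ ≤ C / 2 * ‖e + a‖ ^ 2 + C / 2 * ‖b‖ ^ 2 :=
        (norm_sub_le _ _).trans (add_le_add
          (norm_sub_sub_fderiv_le_of_iteratedFDeriv_two_le hf hC x _)
          (norm_sub_sub_fderiv_le_of_iteratedFDeriv_two_le hf hC x _))
    _ ≤ C / 2 * (2 * (‖e‖ ^ 2 + ‖a‖ ^ 2)) + C / 2 * (2 * ‖b‖ ^ 2) := by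
        gcongr
        linarith [sq_nonneg ‖b‖]
    _ = C * (‖e‖ ^ 2 + ‖a‖ ^ 2 + ‖b‖ ^ 2) := by ring

/-- error propagation bound for one step of the mixed-precision RKC1 scheme
versus the exact RKC1 scheme. -/
theorem mixed_precision_rkc1_error_propagation
    {n : ℕ} (s : ℕ) (hs : 1 ≤ s) (ϑ : ℝ) (hϑ : 0 ≤ ϑ)
    (ω0 ω1 : ℝ) (b μ ν κ : ℕ → ℝ)
    (hω0 : ω0 = 1 + ϑ / (s : ℝ) ^ 2)
    (hω1 : ω1 = chebT ℝ s ω0 / deriv (fun x => chebT ℝ s x) ω0)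
    (hb : ∀ j, j ≤ s → b j = 1 / chebT ℝ j ω0)
    (hμ1 : μ 1 = b 1 * ω1)
    (hμ : ∀ j, 2 ≤ j → j ≤ s → μ j = 2 * ω1 * b j / b (j - 1))
    (hν : ∀ j, 2 ≤ j → j ≤ s → ν j = 2 * ω0 * b j / b (j - 1))
    (hκ : ∀ j, 2 ≤ j → j ≤ s → κ j = -(b j / b (j - 2)))
    (f : EuclideanSpace ℝ (Fin n) → EuclideanSpace ℝ (Fin n))
    (hf : ContDiff ℝ 2 f)
    (Cf'' : ℝ) (hCf'' : ∀ x, ‖iteratedFDeriv ℝ 2 f x‖ ≤ Cf'')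
    (yn yhat : EuclideanSpace ℝ (Fin n)) (Δt : ℝ) (hΔt : 0 < Δt)
    (J : Matrix (Fin n) (Fin n) ℝ) (hJsymm : J.IsHermitian)
    (hJ : HasFDerivAt f ((Matrix.toEuclideanLin J).toContinuousLinearMap) yn)
    (ρ : ℝ) (hρ : 0 ≤ ρ) (heig : ∀ i, hJsymm.eigenvalues i ∈ Set.Icc (-ρ) 0)
    (hstab : Δt * ρ ≤ 2 * ω0 / ω1)
    -- exact RKC1 step
    (d : ℕ → EuclideanSpace ℝ (Fin n))
    (hd0 : d 0 = 0) (hd1 : d 1 = (μ 1 * Δt) • f yn)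
    (hd : ∀ j, 2 ≤ j → j ≤ s →
      d j = ν j • d (j - 1) + κ j • d (j - 2) + (μ j * Δt) • f (yn + d (j - 1)))
    (yn' : EuclideanSpace ℝ (Fin n)) (hyn' : yn' = yn + d s)
    -- mixed-precision RKC1 step
    (Δf : ℕ → EuclideanSpace ℝ (Fin n))
    (dh : ℕ → EuclideanSpace ℝ (Fin n))
    (hdh0 : dh 0 = 0) (hdh1 : dh 1 = (μ 1 * Δt) • f yhat)
    (hdh : ∀ j, 2 ≤ j → j ≤ s →
      dh j = ν j • dh (j - 1) + κ j • dh (j - 2) + (μ j * Δt) • (f yhat + Δf (j - 1)))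
    (yhat' : EuclideanSpace ℝ (Fin n)) (hyhat' : yhat' = yhat + dh s)
    -- assumptions on the perturbations and internal stages
    (Chat ε CΔ Cd : ℝ) (hChat : 0 ≤ Chat) (hε : 0 ≤ ε) (hCΔ : 0 ≤ CΔ) (hCd : 0 ≤ Cd)
    (hΔf : ∀ j, 1 ≤ j → j ≤ s - 1 →
      ‖Δf j - (f (yhat + dh j) - f yhat)‖ ≤ min (Chat * ε * Δt) (CΔ * ‖yhat‖))
    (hdhb : ∀ j, 1 ≤ j → j ≤ s - 1 →
      ‖dh j‖ ≤ Cd * min (Δt * ‖f yhat‖) ‖yhat‖)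
    (hdb : ∀ j, 1 ≤ j → j ≤ s - 1 →
      ‖d j‖ ≤ Cd * min (Δt * ‖f yn‖) ‖yn‖) :
    ‖yhat' - yn'‖ ≤ ‖yhat - yn‖ + Cf'' * ‖yhat - yn‖ ^ 2 * Δt
      + min (Chat * ε * Δt) (CΔ * ‖yhat‖) * Δt
      + Cf'' * Cd ^ 2 * ((min (Δt * ‖f yhat‖) ‖yhat‖) ^ 2 + (min (Δt * ‖f yn‖) ‖yn‖) ^ 2) * Δt := by
  have hw : 1 ≤ ω0 := by
    rw [hω0]
    have : 0 ≤ ϑ / (s : ℝ) ^ 2 := by positivity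
    linarith
  have hw0 : 0 < ω0 := zero_lt_one.trans_le hw
  have hTpos (k : ℕ) : 0 < chebT ℝ k ω0 := zero_lt_one.trans_le (one_le_chebT k hw)
  have hT'pos := deriv_chebT_pos hs hw
  have hω1pos : 0 < ω1 := hω1 ▸ div_pos (hTpos s) hT'pos
  have hC : 0 ≤ Cf'' := (norm_nonneg _).trans (hCf'' yn)
  set A := (Matrix.toEuclideanLin J).toContinuousLinearMap with hA
  set m := min (Chat * ε * Δt) (CΔ * ‖yhat‖)
  set mh := min (Δt * ‖f yhat‖) ‖yhat‖
  set me := min (Δt * ‖f yn‖) ‖yn‖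
  have hm0 : 0 ≤ m := le_min (by positivity) (by positivity)
  set e := yhat - yn with he
  -- operator bounds in the eigenbasis of the Jacobian
  let X : EuclideanSpace ℝ (Fin n) →L[ℝ] EuclideanSpace ℝ (Fin n) := ω0 • 1 + (ω1 * Δt) • A
  have hX (v : EuclideanSpace ℝ (Fin n)) : X v = ω0 • v + (ω1 * Δt) • A v := rfl
  have hXeig (i : Fin n) : X (hJsymm.eigenvectorBasis i)
      = (ω0 + ω1 * Δt * hJsymm.eigenvalues i) • hJsymm.eigenvectorBasis i := by
    have hAi : A (hJsymm.eigenvectorBasis i)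
        = hJsymm.eigenvalues i • hJsymm.eigenvectorBasis i := by
      ext j
      simpa [hA, Matrix.toLpLin_apply] using congrFun (hJsymm.mulVec_eigenvectorBasis i) j
    rw [hX, hAi]
    module
  have hXabs (i : Fin n) : |ω0 + ω1 * Δt * hJsymm.eigenvalues i| ≤ ω0 := by
    obtain ⟨hl, hu⟩ := heig i
    have hstab' : ω1 * Δt * ρ ≤ 2 * ω0 := by
      rw [le_div_iff₀ hω1pos] at hstab
      linarith
    have hc : 0 < ω1 * Δt := by positivity
    rw [abs_le]
    constructor <;> nlinarith
  have hTX (k : ℕ) (v : EuclideanSpace ℝ (Fin n)) :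
      ‖chebT _ k X v‖ ≤ chebT ℝ k ω0 * ‖v‖ :=
    hJsymm.eigenvectorBasis.norm_apply_le_of_eigenvalues _ _
      (fun i => chebT_apply_eigenvector X (hXeig i) k) (hTpos k).le
      (fun i => abs_chebT_le k hw (hXabs i)) v
  have hUX (k : ℕ) (v : EuclideanSpace ℝ (Fin n)) :
      ‖chebU _ k X v‖ ≤ chebU ℝ k ω0 * ‖v‖ :=
    hJsymm.eigenvectorBasis.norm_apply_le_of_eigenvalues _ _
      (fun i => chebU_apply_eigenvector X (hXeig i) k) (chebU_pos k hw).le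
      (fun i => abs_chebU_le k hw (hXabs i)) v
  -- the local residuals
  let p (k : ℕ) : EuclideanSpace ℝ (Fin n) := if k = 0 then f yhat else f yhat + Δf k
  let r (k : ℕ) : EuclideanSpace ℝ (Fin n) :=
    p k - f (yn + d k) - A (yhat + dh k - (yn + d k))
  let R : ℝ := Cf'' * ‖e‖ ^ 2 + m + Cf'' * Cd ^ 2 * (mh ^ 2 + me ^ 2)
  have hr (k : ℕ) (hk : k < s) : ‖r k‖ ≤ R := by
    rcases Nat.eq_zero_or_pos k with rfl | hk0
    · have h := norm_sub_sub_fderiv_le_of_iteratedFDeriv_two_le hf hCf'' yn e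
      rw [hJ.fderiv] at h
      have hr0 : r 0 = f (yn + e) - f yn - A e := by simp [r, p, hd0, hdh0, he]
      rw [hr0]
      have h1 : 0 ≤ Cf'' * Cd ^ 2 * (mh ^ 2 + me ^ 2) := by positivity
      have h2 : 0 ≤ Cf'' * ‖e‖ ^ 2 := by positivity
      simp only [R]
      linarith
    · have hsplit : r k = (Δf k - (f (yhat + dh k) - f yhat))
          + ((f (yn + (e + dh k)) - f yn - A (e + dh k)) - (f (yn + d k) - f yn - A (d k))) := by
        simp only [r, p, if_neg hk0.ne', he]
        rw [show yn + (yhat - yn + dh k) = yhat + dh k by abel,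
          show yhat + dh k - (yn + d k) = (yhat - yn + dh k) - d k by abel, map_sub]
        abel
      have h1 := norm_linearization_error_sub_le hf hCf'' yn e (dh k) (d k)
      rw [hJ.fderiv] at h1
      rw [hsplit]
      calc _ ≤ m + Cf'' * (‖e‖ ^ 2 + ‖dh k‖ ^ 2 + ‖d k‖ ^ 2) :=
            (norm_add_le _ _).trans (add_le_add (hΔf k hk0 (by omega)) h1)
        _ ≤ m + Cf'' * (‖e‖ ^ 2 + (Cd * mh) ^ 2 + (Cd * me) ^ 2) := by
            gcongr
            · exact hdhb k hk0 (by omega)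
            · exact hdb k hk0 (by omega)
        _ = R := by simp only [R]; ring
  -- rescaled stages satisfy the Chebyshev recurrence
  have hrescale (u : ℕ → EuclideanSpace ℝ (Fin n)) (F : EuclideanSpace ℝ (Fin n)) (j : ℕ)
      (hj : j + 2 ≤ s)
      (hu : u (j + 2) = ν (j + 2) • u (j + 1) + κ (j + 2) • u j + (μ (j + 2) * Δt) • F) :
      chebT ℝ (j + 2) ω0 • u (j + 2) = (2 * ω0 * chebT ℝ (j + 1) ω0) • u (j + 1)
        - chebT ℝ j ω0 • u j + (2 * ω1 * Δt * chebT ℝ (j + 1) ω0) • F := by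
    have hb0 := hb j (by omega)
    have hb1 := hb (j + 1) (by omega)
    have hb2 := hb (j + 2) hj
    have h0 := (hTpos j).ne'
    have h1 := (hTpos (j + 1)).ne'
    have h2 := (hTpos (j + 2)).ne'
    have e1 : chebT ℝ (j + 2) ω0 * ν (j + 2) = 2 * ω0 * chebT ℝ (j + 1) ω0 := by
      rw [hν (j + 2) (by omega) hj, show j + 2 - 1 = j + 1 from rfl, hb1, hb2]
      field_simp
    have e2 : chebT ℝ (j + 2) ω0 * κ (j + 2) = -chebT ℝ j ω0 := by
      rw [hκ (j + 2) (by omega) hj, Nat.add_sub_cancel, hb0, hb2]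
      field_simp
    have e3 : chebT ℝ (j + 2) ω0 * (μ (j + 2) * Δt) = 2 * ω1 * Δt * chebT ℝ (j + 1) ω0 := by
      rw [hμ (j + 2) (by omega) hj, show j + 2 - 1 = j + 1 from rfl, hb1, hb2]
      field_simp
    rw [hu, smul_add, smul_add, smul_smul, smul_smul, smul_smul, e1, e2, e3, neg_smul,
      ← sub_eq_add_neg]
  let G (j : ℕ) : EuclideanSpace ℝ (Fin n) := chebT ℝ j ω0 • (yhat + dh j - (yn + d j))
  let g (k : ℕ) : EuclideanSpace ℝ (Fin n) :=
    (ω1 * Δt * ((if k = 0 then 1 else 2) * chebT ℝ k ω0)) • r k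
  have hG1 : G 1 = X • G 0 + g 0 := by
    have hμ1' : ω0 * (μ 1 * Δt) = ω1 * Δt := by
      rw [hμ1, hb 1 hs, chebT]
      field_simp
    have : X • G 0 = ω0 • e + (ω1 * Δt) • A e := by
      rw [ContinuousLinearMap.smul_def, hX]
      simp [G, chebT, hd0, hdh0, he]
    rw [this]
    simp only [G, g, r, p, hd0, hdh0, hd1, hdh1, chebT, if_true, add_zero, mul_one, he, smul_add,
      smul_sub, smul_smul, hμ1']
    abel
  have hG (j : ℕ) (hj : j + 2 ≤ s) : G (j + 2) = (2 * X) • G (j + 1) - G j + g (j + 1) := by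
    have hd' := hrescale d _ j hj (hd (j + 2) (by omega) hj)
    have hdh' := hrescale dh _ j hj (hdh (j + 2) (by omega) hj)
    have hX2 : (2 * X) • G (j + 1) = (2 : ℝ) • (ω0 • G (j + 1) + (ω1 * Δt) • A (G (j + 1))) := by
      rw [two_mul, add_smul, ContinuousLinearMap.smul_def, hX, two_smul]
    rw [hX2]
    simp only [G, g, r, p, if_neg (Nat.succ_ne_zero j), map_smul]
    rw [show yhat + dh (j + 2) - (yn + d (j + 2)) = (yhat - yn) + dh (j + 2) - d (j + 2) by abel,
      smul_sub, smul_add, hd', hdh', chebT]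
    simp only [show j + 2 - 1 = j + 1 from rfl]
    module
  have hGs := chebyshev_recurrence_solution X G g s (fun _ => hG1) hG s le_rfl
  have hG0 : G 0 = e := by simp [G, chebT, hd0, hdh0, he]
  have hsum : ‖∑ k ∈ Finset.range s, chebU _ (s - 1 - k) X • g k‖
      ≤ ω1 * Δt * R * deriv (fun x => chebT ℝ s x) ω0 := by
    rw [deriv_chebT_eq_sum, Finset.mul_sum]
    refine (norm_sum_le _ _).trans (Finset.sum_le_sum fun k hk => ?_)
    have hUk := chebU_pos (s - 1 - k) hw
    have hTk := hTpos k
    have hc : 0 ≤ ω1 * Δt * ((if k = 0 then 1 else 2) * chebT ℝ k ω0) := by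
      split_ifs <;> positivity
    calc ‖chebU _ (s - 1 - k) X • g k‖
        ≤ chebU ℝ (s - 1 - k) ω0 * ‖g k‖ := hUX _ _
      _ ≤ chebU ℝ (s - 1 - k) ω0 *
          (ω1 * Δt * ((if k = 0 then 1 else 2) * chebT ℝ k ω0) * R) := by
        rw [norm_smul, Real.norm_of_nonneg hc]
        gcongr
        exact hr k (Finset.mem_range.mp hk)
      _ = _ := by ring
  have hfinal : chebT ℝ s ω0 * ‖yhat' - yn'‖ ≤ chebT ℝ s ω0 * (‖e‖ + Δt * R) := by
    have hω1' : ω1 * deriv (fun x => chebT ℝ s x) ω0 = chebT ℝ s ω0 := by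
      rw [hω1, div_mul_cancel₀ _ hT'pos.ne']
    calc chebT ℝ s ω0 * ‖yhat' - yn'‖ = ‖G s‖ := by
          rw [norm_smul, Real.norm_of_nonneg (hTpos s).le, hyhat', hyn']
      _ ≤ chebT ℝ s ω0 * ‖e‖ + ω1 * Δt * R * deriv (fun x => chebT ℝ s x) ω0 := by
          rw [hGs, hG0]
          exact (norm_add_le _ _).trans (add_le_add (hTX s e) hsum)
      _ = chebT ℝ s ω0 * (‖e‖ + Δt * R) := by rw [← hω1']; ring
  refine (le_of_mul_le_mul_left hfinal (hTpos s)).trans_eq ?_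
  simp only [R]
  ring
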